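/- There exists a (necessarily unique) subset S_aff of the affine Weyl group W_aff such that (W_aff, S_aff) is a Coxeter system whose length function is the restriction to W_aff of the function ℓ defined by ℓ(w t_λ) = Σ_{α ∈ 𝔯₊, w(α) ∈ 𝔯₊} |⟨λ,α⟩| + Σ_{α ∈ 𝔯₊, w(α) ∈ −𝔯₊} |1 − ⟨λ,α⟩| for w ∈ W_f and λ in the coroot lattice. -/

import Mathlib

open scoped Classical TensorProduct

noncomputable section

namespace SemiInf

/-- The data of a root datum together with its (finite) Weyl group:
finite-rank free `ℤ`-modules `X` and `Y` with a pairing, a finite group `W`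
acting on both, a finite set of roots with a subset of positive roots, and a
coroot map. The axioms are collected in `Ctx.IsRootDatum`. -/
structure Ctx where
  X : Type
  Y : Type
  [addX : AddCommGroup X]
  [addY : AddCommGroup Y]
  W : Type
  [grpW : Group W]
  [finW : Fintype W]
  [actX : DistribMulAction W X]
  [actY : DistribMulAction W Y]
  pair : Y →+ X →+ ℤ
  roots : Finset X
  pos : Finset X
  coroot : X → Y

attribute [instance] Ctx.addX Ctx.addY Ctx.grpW Ctx.finW Ctx.actX Ctx.actY

namespace Ctx

variable (C : Ctx)

/-- The axioms of a root datum (free finite-rank lattices, perfect pairing,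
finite reduced crystallographic root system with a system of positive roots),
with `W` its Weyl group acting faithfully on `X` and `Y`. -/
structure IsRootDatum : Prop where
  free_X : Module.Free ℤ C.X
  finite_X : Module.Finite ℤ C.X
  free_Y : Module.Free ℤ C.Y
  finite_Y : Module.Finite ℤ C.Y
  perfect_left : Function.Bijective fun y : C.Y => C.pair y
  perfect_right : Function.Bijective fun x : C.X => C.pair.flip x
  pos_subset : C.pos ⊆ C.roots
  root_decomp : ∀ α ∈ C.roots, α ∈ C.pos ∨ -α ∈ C.pos
  pos_neg_disjoint : ∀ α ∈ C.pos, -α ∉ C.pos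
  zero_not_root : (0 : C.X) ∉ C.roots
  reduced : ∀ α ∈ C.roots, ∀ n : ℤ, n • α ∈ C.roots → n = 1 ∨ n = -1
  coroot_self : ∀ α ∈ C.roots, C.pair (C.coroot α) α = 2
  isReflection : ∀ α ∈ C.roots, ∃ s : C.W,
    (∀ x : C.X, s • x = x - C.pair (C.coroot α) x • α) ∧
    (∀ y : C.Y, s • y = y - C.pair y α • C.coroot α)
  weyl_gen : ∀ w : C.W, w ∈ Subgroup.closure {s : C.W | ∃ α ∈ C.roots,
    (∀ x : C.X, s • x = x - C.pair (C.coroot α) x • α) ∧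
    (∀ y : C.Y, s • y = y - C.pair y α • C.coroot α)}
  faithful_X : ∀ w : C.W, (∀ x : C.X, w • x = x) → w = 1
  faithful_Y : ∀ w : C.W, (∀ y : C.Y, w • y = y) → w = 1
  pair_inv : ∀ (w : C.W) (y : C.Y) (x : C.X), C.pair (w • y) (w • x) = C.pair y x
  roots_stable : ∀ (w : C.W), ∀ α ∈ C.roots, w • α ∈ C.roots
  smul_coroot : ∀ (w : C.W), ∀ α ∈ C.roots, w • C.coroot α = C.coroot (w • α)
  exists_regular_X : ∃ ξ : C.X, ∀ α ∈ C.pos, 0 < C.pair (C.coroot α) ξ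
  exists_regular_Y : ∃ η : C.Y, ∀ α ∈ C.pos, 0 < C.pair η α

/-- The length function of the finite Weyl group:
`ℓ(w) = #{α ∈ 𝔯₊ : w(α) ∈ −𝔯₊}`. -/
def lenW (w : C.W) : ℕ := (C.pos.filter fun α => -(w • α) ∈ C.pos).card

/-- `w` is the longest element of the finite Weyl group iff it maps every
positive root to a negative root. -/
def IsLongest (w : C.W) : Prop := ∀ α ∈ C.pos, -(w • α) ∈ C.pos

/-- The set `Y₊` of dominant cocharacters. -/
def Ypos : Set C.Y := {l | ∀ α ∈ C.pos, 0 ≤ C.pair l α}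

/-- The set `Y₊₊` of strictly dominant cocharacters. -/
def Yppos : Set C.Y := {l | ∀ α ∈ C.pos, 0 < C.pair l α}

/-- The action of `W` on `Multiplicative Y`, as a homomorphism to `MulAut`. -/
def φext : C.W →* MulAut (Multiplicative C.Y) where
  toFun w :=
    { toFun := fun y => Multiplicative.ofAdd (w • Multiplicative.toAdd y)
      invFun := fun y => Multiplicative.ofAdd (w⁻¹ • Multiplicative.toAdd y)
      left_inv := fun y => by simp
      right_inv := fun y => by simp
      map_mul' := fun a b => by simp [smul_add] }
  map_one' := by
    apply MulEquiv.ext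
    intro y
    simp
  map_mul' w₁ w₂ := by
    apply MulEquiv.ext
    intro y
    simp [mul_smul]

/-- The extended affine Weyl group `W_ext = W_f ⋉ Y`. -/
abbrev Wext : Type := Multiplicative C.Y ⋊[C.φext] C.W

/-- The translation element `t_λ ∈ W_ext` associated with `λ ∈ Y`. -/
def t (l : C.Y) : C.Wext := SemidirectProduct.inl (Multiplicative.ofAdd l)

/-- The canonical embedding of the finite Weyl group in `W_ext`. -/
def σ (w : C.W) : C.Wext := SemidirectProduct.inr w

/-- The length function on `W_ext`, defined by
`ℓ(w t_λ) = Σ_{α ∈ 𝔯₊, w(α) ∈ 𝔯₊} |⟨λ,α⟩| + Σ_{α ∈ 𝔯₊, w(α) ∈ −𝔯₊} |1 − ⟨λ,α⟩|`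
(an element `g` of the semidirect product equals `w t_λ` for `w = g.right`
and `λ = w⁻¹ • g.left`). -/
def len (g : C.Wext) : ℕ :=
  ∑ α ∈ C.pos,
    if g.right • α ∈ C.pos
      then (C.pair (g.right⁻¹ • Multiplicative.toAdd g.left) α).natAbs
      else ((1 : ℤ) - C.pair (g.right⁻¹ • Multiplicative.toAdd g.left) α).natAbs

/-- The coroot lattice `ℤ𝔯∨ ⊆ Y`. -/
def corootLattice : AddSubgroup C.Y := AddSubgroup.closure (C.coroot '' ↑C.roots)

/-- The affine Weyl group `W_aff = W_f ⋉ ℤ𝔯∨`, as a subgroup of `W_ext`. -/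
def Waff : Subgroup C.Wext :=
  Subgroup.closure ((fun l => C.t l) '' ↑C.corootLattice ∪ Set.range C.σ)

/-- The set of elements of length `1` of `W_aff` (the simple affine
reflections). -/
def Saff : Set C.Wext := {g | g ∈ C.Waff ∧ C.len g = 1}

/-- The set `Ω` of elements of length `0` of `W_ext`. -/
def OmegaSet : Set C.Wext := {g | C.len g = 0}

/-- The Bruhat order on `W_aff`: `u ≤ v` iff some reduced expression of `v`
(as a word in `S_aff`) admits a subword which is an expression of `u`. -/
def bruhatAff (u v : C.Wext) : Prop :=
  ∃ l : List C.Wext, (∀ s ∈ l, s ∈ C.Saff) ∧ l.prod = v ∧ l.length = C.len v ∧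
    ∃ l' : List C.Wext, l'.Sublist l ∧ l'.prod = u

/-- The Bruhat order on `W_ext`, extending the Bruhat order of `W_aff` by
`ω u ≤ ω' v` iff `ω = ω'` and `u ≤ v`, for `ω, ω' ∈ Ω` and `u, v ∈ W_aff`. -/
def bruhat (x y : C.Wext) : Prop :=
  ∃ ω u v : C.Wext, ω ∈ C.OmegaSet ∧ u ∈ C.Waff ∧ v ∈ C.Waff ∧
    x = ω * u ∧ y = ω * v ∧ C.bruhatAff u v

/-- The set `W_ext⁺` of `w ∈ W_ext` such that `ℓ(t_μ w) = ℓ(t_μ) + ℓ(w)` for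
every dominant `μ`. -/
def WextPlus : Set C.Wext :=
  {w | ∀ μ ∈ C.Ypos, C.len (C.t μ * w) = C.len (C.t μ) + C.len w}

/-- The semiinfinite order on `W_ext`. -/
def siLE (w y : C.Wext) : Prop :=
  ∃ μ : C.Y, C.t μ * w ∈ C.WextPlus ∧ C.t μ * y ∈ C.WextPlus ∧
    C.bruhat (C.t μ * w) (C.t μ * y)

/-- The rational vector space `ℚ ⊗ Y`. -/
abbrev QY : Type := ℚ ⊗[ℤ] C.Y

/-- The canonical map `Y → ℚ ⊗ Y`. -/
def ι : C.Y →ₗ[ℤ] C.QY := TensorProduct.mk ℤ ℚ C.Y 1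

/-- The finite set of positive coroots. -/
def posCoroots : Finset C.Y := C.pos.image C.coroot

/-- Half the sum of the positive coroots, as an element of `ℚ ⊗ Y`. -/
def rhoCheck : C.QY := (2⁻¹ : ℚ) ⊗ₜ[ℤ] (∑ β ∈ C.posCoroots, β)

/-- The set of Kostant partitions of `v ∈ ℚ ⊗ Y`: functions
`φ : 𝔯∨₊ → ℤ≥0` with `Σ_α φ(α)·α = v`. -/
def KostantSet (v : C.QY) : Set (↥C.posCoroots → ℕ) :=
  {φ | ∑ β : ↥C.posCoroots, (φ β) • C.ι (β : C.Y) = v}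

/-- Kostant's partition function. -/
def KostantP (v : C.QY) : ℕ := (C.KostantSet v).ncard

/-- The action of `w ∈ W` on `ℚ ⊗ Y`. -/
def actQ (w : C.W) : C.QY →ₗ[ℤ] C.QY :=
  LinearMap.lTensor ℚ ((DistribMulAction.toAddMonoidHom C.Y w).toIntLinearMap)

/-- The simple roots: positive roots which are not sums of two positive
roots. -/
def simpleRoots : Finset C.X :=
  C.pos.filter fun α => ¬ ∃ β ∈ C.pos, ∃ γ ∈ C.pos, α = β + γ

end Ctx

end SemiInf

/-!
The affine Weyl group acts on the affine roots, the functions `y ↦ n - ⟨y, α⟩` on `Y` with `α` a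
root. A point inside an alcove makes every affine root positive or negative, and the simple affine
roots are the positive ones that are not sums of two positive ones, where positive constants are
counted as roots too. Since root strings are unbroken, the reflection in a simple root permutes the
remaining positive roots, so `g` has one inversion more or less than `g * s`, and counting the
inversions of `w t_λ` by their gradients gives the sum defining `ℓ(w t_λ)`.

A group with such an action has a Coxeter presentation. The point at which a root turns negative
along a word gives the exchange property, so reduced words have as many letters as there are
inversions. Map the abstract Coxeter group onto the given group. If two elements of equal length
have the same image and right descents `i` and `j`, that image ends in the longest element of the
finite dihedral group generated by `s i` and `s j`; the braid relation therefore yields a third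
element over it with both descents, and induction on the length identifies all three.
-/

namespace SemiInf

/-! ### Groups generated by simple reflections are Coxeter groups -/

/-- The combinatorial skeleton of a reflection group acting on its roots: `s i` is the reflection in
the simple root `a i`, and `P` is the set of positive roots. The set `Φ` carries no negation, so
`g • b ∉ P` plays the part of "`g • b` is negative" for `b ∈ P`. -/
structure IsSimpleSystem {G B Φ : Type*} [Group G] [MulAction G Φ] (s : B → G) (a : B → Φ)
    (P : Set Φ) : Prop where
  mul_self : ∀ i, s i * s i = 1
  injective : Function.Injective a
  mem : ∀ i, a i ∈ P
  smul_smul_mem_iff : ∀ (g : G) i, g • s i • a i ∈ P ↔ g • a i ∉ P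
  smul_mem : ∀ i, ∀ b ∈ P, b ≠ a i → s i • b ∈ P
  mul_eq_mul : ∀ {g : G} {i j}, g • a i = a j → g * s i = s j * g
  closure_range : Subgroup.closure (Set.range s) = ⊤

section Inversions

variable {G Φ : Type*} [Group G] [MulAction G Φ]

/-- The inversion set of `g` relative to a set `P` of positive roots. -/
def inversions (P : Set Φ) (g : G) : Set Φ := {b ∈ P | g • b ∉ P}

theorem inversions_one (P : Set Φ) : inversions P (1 : G) = ∅ := by
  simp [inversions]

end Inversions

/-- The product of the word `ω` in the generators `s`. -/
def wordProd {G B : Type*} [Group G] (s : B → G) (ω : List B) : G := (ω.map s).prod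

section WordProd

variable {G B : Type*} [Group G] (s : B → G)

theorem wordProd_cons (i : B) (ω : List B) : wordProd s (i :: ω) = s i * wordProd s ω := by
  simp [wordProd]

theorem wordProd_concat (ω : List B) (i : B) :
    wordProd s (ω.concat i) = wordProd s ω * s i := by
  simp [wordProd]

theorem map_coxeterSystem_wordProd {M : CoxeterMatrix B} {W : Type*} [Group W]
    (cs : CoxeterSystem M W) (f : W →* G) (ω : List B) :
    f (cs.wordProd ω) = wordProd (fun i ↦ f (cs.simple i)) ω := by
  simp [wordProd, CoxeterSystem.wordProd, map_list_prod, Function.comp_def]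

open CoxeterSystem in
theorem isRightDescent_mul_alternatingWord {M : CoxeterMatrix B} {W : Type*} [Group W]
    (cs : CoxeterSystem M W) {w : W} {i j : B} {n : ℕ} (hn : n ≠ 0)
    (hlen : cs.length w + n ≤ cs.length (w * cs.wordProd (alternatingWord i j n))) :
    cs.IsRightDescent (w * cs.wordProd (alternatingWord i j n)) j := by
  obtain ⟨k, rfl⟩ := Nat.exists_eq_succ_of_ne_zero hn
  have hle := cs.length_wordProd_le (alternatingWord j i k)
  have hmul := cs.length_mul_le w (cs.wordProd (alternatingWord j i k))
  rw [length_alternatingWord] at hle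
  rw [IsRightDescent]
  rw [alternatingWord_succ, cs.wordProd_concat] at hlen ⊢
  rw [← mul_assoc] at hlen ⊢
  rw [cs.simple_mul_simple_cancel_right]
  omega

open CoxeterSystem in
theorem isRightDescent_mul_braidWord {M : CoxeterMatrix B} {W : Type*} [Group W]
    (cs : CoxeterSystem M W) {w : W} {i j : B} (hM : M i j ≠ 0)
    (hlen : cs.length w + M i j ≤ cs.length (w * cs.wordProd (braidWord M i j))) :
    cs.IsRightDescent (w * cs.wordProd (braidWord M i j)) i ∧
      cs.IsRightDescent (w * cs.wordProd (braidWord M i j)) j := by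
  refine ⟨?_, isRightDescent_mul_alternatingWord cs hM hlen⟩
  rw [cs.wordProd_braidWord_eq] at hlen ⊢
  rw [M.symmetric i j] at hlen hM
  exact isRightDescent_mul_alternatingWord cs hM hlen

theorem wordProd_mem_closure {s : B → G} {I : Set B} {ω : List B} (hω : ∀ i ∈ ω, i ∈ I) :
    wordProd s ω ∈ Subgroup.closure (s '' I) := by
  refine Subgroup.list_prod_mem _ fun x hx ↦ ?_
  obtain ⟨i, hi, rfl⟩ := List.mem_map.1 hx
  exact Subgroup.subset_closure ⟨i, hω i hi, rfl⟩

end WordProd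

namespace IsSimpleSystem

open CoxeterSystem (alternatingWord alternatingWord_succ length_alternatingWord braidWord)

variable {G B Φ : Type*} [Group G] [MulAction G Φ] {s : B → G} {a : B → Φ} {P : Set Φ}

section

variable (hs : IsSimpleSystem s a P)
include hs

theorem inv_simple (i : B) : (s i)⁻¹ = s i := inv_eq_of_mul_eq_one_left (hs.mul_self i)

theorem mul_simple_cancel_right (g : G) (i : B) : g * s i * s i = g := by
  rw [mul_assoc, hs.mul_self, mul_one]

theorem closure_induction {I : Set B} {p : G → Prop} {g : G} (hg : g ∈ Subgroup.closure (s '' I))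
    (one : p 1) (mul_simple : ∀ g, ∀ i ∈ I, p g → p (g * s i)) : p g := by
  induction hg using Subgroup.closure_induction_right with
  | one => exact one
  | mul_right x _ y hy ih =>
    obtain ⟨i, hi, rfl⟩ := hy
    exact mul_simple x i hi ih
  | mul_inv_cancel x _ y hy ih =>
    obtain ⟨i, hi, rfl⟩ := hy
    exact (hs.inv_simple i).symm ▸ mul_simple x i hi ih

theorem mem_closure_univ (g : G) : g ∈ Subgroup.closure (s '' Set.univ) := by
  rw [Set.image_univ, hs.closure_range]
  exact Subgroup.mem_top g

theorem simple_induction {p : G → Prop} (g : G) (one : p 1)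
    (mul_simple : ∀ g i, p g → p (g * s i)) : p g :=
  hs.closure_induction (hs.mem_closure_univ g) one fun g i _ ↦ mul_simple g i

theorem mul_simple_smul_mem_iff (g : G) (i : B) : (g * s i) • a i ∈ P ↔ g • a i ∉ P := by
  rw [mul_smul, hs.smul_smul_mem_iff]

theorem simple_smul_notMem (i : B) : s i • a i ∉ P := by
  simpa [hs.mem i] using hs.smul_smul_mem_iff 1 i

theorem simple_injective : Function.Injective s := by
  intro i j hij
  by_contra hne
  exact hs.simple_smul_notMem j (hij ▸ hs.smul_mem i _ (hs.mem j) fun h ↦ hne (hs.injective h).symm)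

theorem inversions_mul_simple {g : G} {i : B} (h : g • a i ∈ P) :
    inversions P (g * s i) = insert (a i) ((s i • ·) '' inversions P g) := by
  ext b
  simp only [inversions, Set.mem_insert_iff, Set.mem_image, Set.mem_ofPred_eq, mul_smul]
  constructor
  · rintro ⟨hb, hgb⟩
    refine or_iff_not_imp_left.2 fun hne ↦ ⟨s i • b, ⟨hs.smul_mem i b hb hne, hgb⟩, ?_⟩
    rw [smul_smul, hs.mul_self, one_smul]
  · rintro (rfl | ⟨c, ⟨hc, hgc⟩, rfl⟩)
    · exact ⟨hs.mem i, fun h' ↦ (hs.smul_smul_mem_iff g i).1 h' h⟩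
    · refine ⟨hs.smul_mem i c hc fun hci ↦ hgc (hci ▸ h), ?_⟩
      rwa [smul_smul (s i), hs.mul_self, one_smul]

theorem finite_inversions (g : G) : (inversions P g).Finite := by
  have key (g : G) (i : B) (hg : (inversions P g).Finite) : (inversions P (g * s i)).Finite := by
    by_cases h : g • a i ∈ P
    · exact hs.inversions_mul_simple h ▸ (hg.image _).insert _
    · have h' := hs.inversions_mul_simple ((hs.mul_simple_smul_mem_iff g i).2 h)
      rw [hs.mul_simple_cancel_right] at h'
      rw [h'] at hg
      exact (hg.subset (Set.subset_insert _ _)).of_finite_image (MulAction.injective _).injOn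
  exact hs.simple_induction g (inversions_one (G := G) P ▸ Set.finite_empty) key

theorem ncard_inversions_mul_simple {g : G} {i : B} (h : g • a i ∈ P) :
    (inversions P (g * s i)).ncard = (inversions P g).ncard + 1 := by
  have hnotMem : a i ∉ (s i • ·) '' inversions P g := by
    rintro ⟨c, ⟨hc, -⟩, hci⟩
    have : s i • a i = c := by rw [← hci, smul_smul, hs.mul_self, one_smul]
    exact hs.simple_smul_notMem i (this ▸ hc)
  rw [hs.inversions_mul_simple h,
    Set.ncard_insert_of_notMem hnotMem ((hs.finite_inversions g).image _),
    Set.ncard_image_of_injective _ (MulAction.injective (s i))]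

theorem ncard_inversions_mul_simple_add_one {g : G} {i : B} (h : g • a i ∉ P) :
    (inversions P (g * s i)).ncard + 1 = (inversions P g).ncard := by
  rw [← hs.ncard_inversions_mul_simple ((hs.mul_simple_smul_mem_iff g i).2 h),
    hs.mul_simple_cancel_right]

theorem ncard_inversions_mul_simple_le (g : G) (i : B) :
    (inversions P (g * s i)).ncard ≤ (inversions P g).ncard + 1 := by
  by_cases h : g • a i ∈ P
  · exact (hs.ncard_inversions_mul_simple h).le
  · have := hs.ncard_inversions_mul_simple_add_one h
    omega

theorem ncard_inversions_wordProd_le (ω : List B) :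
    (inversions P (wordProd s ω)).ncard ≤ ω.length := by
  induction ω using List.reverseRecOn with
  | nil => simp [wordProd, inversions_one]
  | append_singleton ω i ih =>
    rw [← List.concat_eq_append, wordProd_concat, List.length_concat]
    exact (hs.ncard_inversions_mul_simple_le _ i).trans (by omega)

/-- Strong exchange: deleting the letter at which the root turns negative multiplies the word by the
reflection `u * s i * u⁻¹`. -/
theorem exists_sublist_wordProd_mul {u : G} {i : B} (hu : u • a i ∈ P) (ω : List B)
    (hω : (wordProd s ω * u) • a i ∉ P) :
    ∃ ω', ω'.Sublist ω ∧ ω'.length + 1 = ω.length ∧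
      wordProd s ω * (u * s i) = wordProd s ω' * u := by
  induction ω with
  | nil => simp [wordProd, hu] at hω
  | cons r ω ih =>
    rw [wordProd_cons, mul_assoc, mul_smul] at hω
    by_cases hpos : (wordProd s ω * u) • a i ∈ P
    · have hr : (wordProd s ω * u) • a i = a r := by
        by_contra hne
        exact hω (hs.smul_mem r _ hpos hne)
      refine ⟨ω, List.sublist_cons_self r ω, rfl, ?_⟩
      rw [wordProd_cons, mul_assoc, ← mul_assoc _ u, hs.mul_eq_mul hr, ← mul_assoc (s r),
        hs.mul_self, one_mul]
    · obtain ⟨ω', hsub, hlen, heq⟩ := ih hpos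
      refine ⟨r :: ω', hsub.cons_cons r, by simpa using hlen, ?_⟩
      rw [wordProd_cons, wordProd_cons, mul_assoc, heq, mul_assoc]

theorem exists_reduced_word_of_mem_closure {I : Set B} {g : G}
    (hg : g ∈ Subgroup.closure (s '' I)) :
    ∃ ω : List B, (∀ i ∈ ω, i ∈ I) ∧ wordProd s ω = g ∧ ω.length = (inversions P g).ncard := by
  have key (g : G) (i : B) (hi : i ∈ I) : (∃ ω : List B, (∀ i ∈ ω, i ∈ I) ∧ wordProd s ω = g ∧
      ω.length = (inversions P g).ncard) → ∃ ω : List B, (∀ i ∈ ω, i ∈ I) ∧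
      wordProd s ω = g * s i ∧ ω.length = (inversions P (g * s i)).ncard := by
    rintro ⟨ω, hω, rfl, hlen⟩
    by_cases h : wordProd s ω • a i ∈ P
    · refine ⟨ω.concat i, ?_, wordProd_concat s ω i, ?_⟩
      · simpa [or_imp, forall_and] using ⟨hω, hi⟩
      · rw [hs.ncard_inversions_mul_simple h, List.length_concat, hlen]
    · obtain ⟨ω', hsub, hlen', heq⟩ := hs.exists_sublist_wordProd_mul (u := 1)
        ((one_smul G (a i)).symm ▸ hs.mem i) ω (by rwa [mul_one])
      rw [one_mul, mul_one] at heq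
      have := hs.ncard_inversions_mul_simple_add_one h
      exact ⟨ω', fun j hj ↦ hω j (hsub.subset hj), heq.symm, by omega⟩
  exact hs.closure_induction hg ⟨[], by simp, by simp [wordProd], by simp [inversions_one]⟩ key

theorem exists_reduced_word (g : G) :
    ∃ ω : List B, wordProd s ω = g ∧ ω.length = (inversions P g).ncard := by
  obtain ⟨ω, -, hω⟩ := hs.exists_reduced_word_of_mem_closure (hs.mem_closure_univ g)
  exact ⟨ω, hω⟩

theorem ncard_inversions_mul_wordProd {I : Set B} {h : G}
    (hmin : ∀ u ∈ Subgroup.closure (s '' I),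
      (inversions P h).ncard ≤ (inversions P (h * u)).ncard)
    {ω : List B} (hω : ∀ i ∈ ω, i ∈ I) (hred : (inversions P (wordProd s ω)).ncard = ω.length) :
    (inversions P (h * wordProd s ω)).ncard = (inversions P h).ncard + ω.length := by
  induction ω using List.reverseRecOn with
  | nil => simp [wordProd]
  | append_singleton ω i ih =>
    simp only [← List.concat_eq_append, wordProd_concat, List.length_concat] at hred ⊢
    set u := wordProd s ω
    have hu : u ∈ Subgroup.closure (s '' I) :=
      wordProd_mem_closure fun j hj ↦ hω j (List.mem_append_left _ hj)
    have hsi : s i ∈ Subgroup.closure (s '' I) :=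
      Subgroup.subset_closure ⟨i, hω i (by simp), rfl⟩
    have hule : (inversions P u).ncard ≤ ω.length := hs.ncard_inversions_wordProd_le ω
    have hpos : u • a i ∈ P := by
      by_contra hneg
      have := hs.ncard_inversions_mul_simple_add_one hneg
      omega
    have hstep := hs.ncard_inversions_mul_simple hpos
    have ih := ih (fun j hj ↦ hω j (List.mem_append_left _ hj)) (by omega)
    suffices hhu : (h * u) • a i ∈ P by
      rw [← mul_assoc, hs.ncard_inversions_mul_simple hhu, ih, add_assoc]
    -- Exchange would produce an element of `h * closure (s '' I)` shorter than `h`.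
    by_contra hneg
    obtain ⟨A, rfl, hA⟩ := hs.exists_reduced_word h
    obtain ⟨A', -, hlen, heq⟩ := hs.exists_sublist_wordProd_mul hpos A hneg
    have hle := hmin (u * s i * u⁻¹) (mul_mem (mul_mem hu hsi) (inv_mem hu))
    rw [← mul_assoc, heq, mul_inv_cancel_right] at hle
    have := hs.ncard_inversions_wordProd_le A'
    omega

/-- The Coxeter matrix of a simple system, with the convention of `orderOf` that products of
infinite order get the entry `0`. -/
def coxeterMatrix : CoxeterMatrix B where
  M := Matrix.of fun i j ↦ orderOf (s i * s j)
  isSymm := by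
    ext i j
    rw [Matrix.transpose_apply, Matrix.of_apply, Matrix.of_apply, ← orderOf_inv, mul_inv_rev,
      hs.inv_simple, hs.inv_simple]
  diagonal i := by simp [hs.mul_self]
  off_diagonal i j hij := by
    rw [Matrix.of_apply, Ne, orderOf_eq_one_iff, mul_eq_one_iff_eq_inv, hs.inv_simple]
    exact hs.simple_injective.ne hij

theorem isLiftable : hs.coxeterMatrix.IsLiftable s := fun _ _ ↦ pow_orderOf_eq_one _

/-- The Coxeter system tautologically attached to the abstract group presented by the Coxeter
matrix. -/
abbrev presented : CoxeterSystem hs.coxeterMatrix hs.coxeterMatrix.Group :=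
  hs.coxeterMatrix.toCoxeterSystem

/-- The homomorphism from the abstract Coxeter group that sends simple reflections to simple
reflections. -/
def ofCoxeterGroup : hs.coxeterMatrix.Group →* G :=
  hs.presented.lift ⟨s, hs.isLiftable⟩

theorem ofCoxeterGroup_simple (i : B) : hs.ofCoxeterGroup (hs.presented.simple i) = s i :=
  hs.presented.lift_apply_simple hs.isLiftable i

theorem ofCoxeterGroup_wordProd (ω : List B) :
    hs.ofCoxeterGroup (hs.presented.wordProd ω) = wordProd s ω := by
  simp only [map_coxeterSystem_wordProd, hs.ofCoxeterGroup_simple]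

theorem ncard_inversions_ofCoxeterGroup_le (x : hs.coxeterMatrix.Group) :
    (inversions P (hs.ofCoxeterGroup x)).ncard ≤ hs.presented.length x := by
  obtain ⟨ω, hω, rfl⟩ := hs.presented.exists_isReduced x
  rw [hω.eq, hs.ofCoxeterGroup_wordProd]
  exact hs.ncard_inversions_wordProd_le ω

theorem inv_wordProd_alternatingWord_mul (i j : B) (n : ℕ) :
    (wordProd s (alternatingWord j i n))⁻¹ * wordProd s (alternatingWord i j n) =
      (s i * s j) ^ n := by
  induction n generalizing i j with
  | zero => simp [alternatingWord, wordProd]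
  | succ n ih =>
    rw [alternatingWord_succ, alternatingWord_succ, wordProd_concat, wordProd_concat, mul_inv_rev,
      hs.inv_simple, mul_assoc, ← mul_assoc _ _ (s j), ih j i, ← mul_assoc, ← mul_pow_mul,
      pow_succ, mul_assoc]

theorem length_le_of_reduced_alternatingWord {i j : B} {n : ℕ} (hM : hs.coxeterMatrix i j ≠ 0)
    (hred : (inversions P (wordProd s (alternatingWord i j n))).ncard = n) :
    n ≤ hs.coxeterMatrix i j := by
  by_contra! hlt
  refine hs.presented.not_isReduced_alternatingWord i j hM hlt
    (le_antisymm (hs.presented.length_wordProd_le _) ?_)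
  rw [length_alternatingWord]
  conv_lhs => rw [← hred, ← hs.ofCoxeterGroup_wordProd]
  exact hs.ncard_inversions_ofCoxeterGroup_le _

theorem eq_alternatingWord_of_reduced {i j : B} (ω : List B) (hω : ∀ k ∈ ω, k = i ∨ k = j)
    (hred : (inversions P (wordProd s (ω.concat j))).ncard = ω.length + 1) :
    ω.concat j = alternatingWord i j (ω.length + 1) := by
  induction ω using List.reverseRecOn generalizing i j with
  | nil => rfl
  | append_singleton ω k ih =>
    rw [← List.concat_eq_append] at hred hω ⊢
    rw [List.length_concat] at hred ⊢
    rw [wordProd_concat] at hred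
    have hle := hs.ncard_inversions_mul_simple_le (wordProd s (ω.concat k)) j
    have hle' := hs.ncard_inversions_wordProd_le (ω.concat k)
    rw [List.length_concat] at hle'
    obtain rfl : k = i := by
      refine (hω k (by simp)).resolve_right ?_
      rintro rfl
      rw [wordProd_concat, hs.mul_simple_cancel_right] at hred
      have := hs.ncard_inversions_wordProd_le ω
      omega
    rw [alternatingWord_succ, ih (fun l hl ↦ (hω l (by simp [hl])).symm) (by omega)]

theorem exists_eq_wordProd_alternatingWord {i j : B} {g : G}
    (hg : g ∈ Subgroup.closure (s '' {i, j})) (hj : g • a j ∉ P) :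
    wordProd s (alternatingWord i j (inversions P g).ncard) = g := by
  have hmem : g * s j ∈ Subgroup.closure (s '' {i, j}) :=
    mul_mem hg (Subgroup.subset_closure ⟨j, by simp, rfl⟩)
  obtain ⟨ω, hω, hprod, hlen⟩ := hs.exists_reduced_word_of_mem_closure hmem
  have hg' : wordProd s (ω.concat j) = g := by
    rw [wordProd_concat, hprod, hs.mul_simple_cancel_right]
  have hlen' : (inversions P g).ncard = ω.length + 1 := by
    rw [hlen, hs.ncard_inversions_mul_simple_add_one hj]
  rw [hlen', ← hs.eq_alternatingWord_of_reduced ω hω (hg' ▸ hlen'), hg']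

theorem eq_braidWord_of_descents {i j : B} {g : G} (hg : g ∈ Subgroup.closure (s '' {i, j}))
    (hi : g • a i ∉ P) (hj : g • a j ∉ P) :
    (inversions P g).ncard = hs.coxeterMatrix i j ∧ hs.coxeterMatrix i j ≠ 0 ∧
      wordProd s (braidWord hs.coxeterMatrix i j) = g := by
  set n := (inversions P g).ncard with hn
  have hij := hs.exists_eq_wordProd_alternatingWord hg hj
  have hji := hs.exists_eq_wordProd_alternatingWord (Set.pair_comm i j ▸ hg) hi
  have hpow : (s i * s j) ^ n = 1 := by
    rw [← hs.inv_wordProd_alternatingWord_mul, hij, hji, inv_mul_cancel]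
  have hdvd : hs.coxeterMatrix i j ∣ n := orderOf_dvd_of_pow_eq_one hpow
  have hn0 : 0 < n := by
    have := hs.ncard_inversions_mul_simple_add_one hj
    omega
  have hM : hs.coxeterMatrix i j ≠ 0 := ne_zero_of_dvd_ne_zero hn0.ne' hdvd
  have heq : n = hs.coxeterMatrix i j :=
    le_antisymm (hs.length_le_of_reduced_alternatingWord hM (hij.symm ▸ hn.symm))
      (Nat.le_of_dvd hn0 hdvd)
  exact ⟨heq, hM, by rw [braidWord, ← heq, hij]⟩

theorem ncard_inversions_mul_of_minimal {I : Set B} {h u : G}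
    (hmin : ∀ u ∈ Subgroup.closure (s '' I),
      (inversions P h).ncard ≤ (inversions P (h * u)).ncard)
    (hu : u ∈ Subgroup.closure (s '' I)) :
    (inversions P (h * u)).ncard = (inversions P h).ncard + (inversions P u).ncard := by
  obtain ⟨ω, hω, rfl, hlen⟩ := hs.exists_reduced_word_of_mem_closure hu
  rw [hs.ncard_inversions_mul_wordProd hmin hω hlen.symm, hlen]

theorem exists_eq_mul_braidWord {i j : B} {g : G} (hi : g • a i ∉ P) (hj : g • a j ∉ P) :
    ∃ h, h * wordProd s (braidWord hs.coxeterMatrix i j) = g ∧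
      (inversions P h).ncard + hs.coxeterMatrix i j = (inversions P g).ncard ∧
      hs.coxeterMatrix i j ≠ 0 := by
  set H := Subgroup.closure (s '' {i, j})
  obtain ⟨u, hu, hmin⟩ := (measure fun u ↦ (inversions P (g * u)).ncard).wf.has_min
    (H : Set G) ⟨1, one_mem H⟩
  have hmin (v : G) (hv : v ∈ H) :
      (inversions P (g * u)).ncard ≤ (inversions P (g * u * v)).ncard := by
    rw [mul_assoc]
    exact not_lt.1 (hmin (u * v) (mul_mem hu hv))
  have hadd {v : G} (hv : v ∈ H) := hs.ncard_inversions_mul_of_minimal hmin hv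
  have hdescent (k : B) (hk : k ∈ ({i, j} : Set B)) (hgk : g • a k ∉ P) : u⁻¹ • a k ∉ P := by
    intro hpos
    have hgu := hadd (inv_mem hu)
    have hgus := hadd (mul_mem (inv_mem hu) (Subgroup.subset_closure ⟨k, hk, rfl⟩))
    rw [hs.ncard_inversions_mul_simple hpos, ← mul_assoc, mul_inv_cancel_right] at hgus
    rw [mul_inv_cancel_right] at hgu
    have := hs.ncard_inversions_mul_simple_add_one hgk
    omega
  obtain ⟨hlen, hM, hbraid⟩ := hs.eq_braidWord_of_descents (inv_mem hu)
    (hdescent i (by simp) hi) (hdescent j (by simp) hj)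
  refine ⟨g * u, by rw [hbraid, mul_inv_cancel_right], ?_, hM⟩
  rw [← hlen, ← hadd (inv_mem hu), mul_inv_cancel_right]

/-- An element of the abstract Coxeter group is tight if its length is the number of inversions of
its image; in the end every element is. -/
def IsTight (x : hs.coxeterMatrix.Group) : Prop :=
  (inversions P (hs.ofCoxeterGroup x)).ncard = hs.presented.length x

theorem isTight_of_length_le {x : hs.coxeterMatrix.Group}
    (h : hs.presented.length x ≤ (inversions P (hs.ofCoxeterGroup x)).ncard) : hs.IsTight x :=
  (hs.ncard_inversions_ofCoxeterGroup_le x).antisymm h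

theorem exists_isTight (g : G) : ∃ x, hs.IsTight x ∧ hs.ofCoxeterGroup x = g := by
  obtain ⟨ω, rfl, hω⟩ := hs.exists_reduced_word g
  refine ⟨hs.presented.wordProd ω, hs.isTight_of_length_le ?_, hs.ofCoxeterGroup_wordProd ω⟩
  rw [hs.ofCoxeterGroup_wordProd, ← hω]
  exact hs.presented.length_wordProd_le ω

theorem exists_isTight_of_descents {g : G} {i j : B} (hi : g • a i ∉ P) (hj : g • a j ∉ P) :
    ∃ x, hs.IsTight x ∧ hs.ofCoxeterGroup x = g ∧
      hs.presented.IsRightDescent x i ∧ hs.presented.IsRightDescent x j := by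
  obtain ⟨h, rfl, hcard, hM⟩ := hs.exists_eq_mul_braidWord hi hj
  obtain ⟨w, hw, rfl⟩ := hs.exists_isTight h
  set b := hs.presented.wordProd (braidWord hs.coxeterMatrix i j)
  have hmap : hs.ofCoxeterGroup b = wordProd s (braidWord hs.coxeterMatrix i j) :=
    hs.ofCoxeterGroup_wordProd _
  rw [← hmap, ← map_mul, hw] at hcard
  have hb : hs.presented.length b ≤ hs.coxeterMatrix i j := by
    simpa using hs.presented.length_wordProd_le (braidWord hs.coxeterMatrix i j)
  have htight : hs.IsTight (w * b) := by
    refine hs.isTight_of_length_le ((hs.presented.length_mul_le w b).trans ?_)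
    omega
  exact ⟨w * b, htight, by rw [map_mul, hmap],
    isRightDescent_mul_braidWord hs.presented hM (hcard.trans htight).le⟩

end

variable {hs : IsSimpleSystem s a P}

theorem IsTight.smul_notMem {x : hs.coxeterMatrix.Group}
    (hx : hs.IsTight x) {i : B} (hi : hs.presented.IsRightDescent x i) :
    hs.ofCoxeterGroup x • a i ∉ P := by
  intro hpos
  have hle := hs.ncard_inversions_ofCoxeterGroup_le (x * hs.presented.simple i)
  rw [map_mul, hs.ofCoxeterGroup_simple, hs.ncard_inversions_mul_simple hpos, hx] at hle
  exact absurd hi (by unfold CoxeterSystem.IsRightDescent; omega)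

theorem IsTight.mul_simple {x : hs.coxeterMatrix.Group}
    (hx : hs.IsTight x) {i : B} (hi : hs.presented.IsRightDescent x i) :
    hs.IsTight (x * hs.presented.simple i) := by
  refine hs.isTight_of_length_le ?_
  have hcard := hs.ncard_inversions_mul_simple_add_one (hx.smul_notMem hi)
  rw [hs.presented.isRightDescent_iff, ← hx] at hi
  rw [map_mul, hs.ofCoxeterGroup_simple]
  omega

theorem IsTight.eq_of_ofCoxeterGroup_eq {x y : hs.coxeterMatrix.Group}
    (hx : hs.IsTight x) (hy : hs.IsTight y) (hxy : hs.ofCoxeterGroup x = hs.ofCoxeterGroup y) :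
    x = y := by
  obtain ⟨n, hn⟩ : ∃ n, hs.presented.length x = n := ⟨_, rfl⟩
  have hyn : hs.presented.length y = n := by rw [← hy, ← hxy, hx, hn]
  induction n generalizing x y with
  | zero => rw [hs.presented.length_eq_zero_iff.1 hn, hs.presented.length_eq_zero_iff.1 hyn]
  | succ n ih =>
    have common_descent {x y : hs.coxeterMatrix.Group} (hx : hs.IsTight x) (hy : hs.IsTight y)
        (hxy : hs.ofCoxeterGroup x = hs.ofCoxeterGroup y) (hn : hs.presented.length x = n + 1)
        {i : B} (hxi : hs.presented.IsRightDescent x i) (hyi : hs.presented.IsRightDescent y i) :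
        x = y := by
      have htx := hx.mul_simple hxi
      have hty := hy.mul_simple hyi
      have hmap : hs.ofCoxeterGroup (x * hs.presented.simple i) =
          hs.ofCoxeterGroup (y * hs.presented.simple i) := by rw [map_mul, map_mul, hxy]
      have hlen : hs.presented.length (x * hs.presented.simple i) = n := by
        rw [hs.presented.isRightDescent_iff] at hxi
        omega
      exact mul_right_cancel (ih htx hty hmap hlen (by rw [← hty, ← hmap, htx, hlen]))
    have ne_one {w : hs.coxeterMatrix.Group} (hw : hs.presented.length w = n + 1) : w ≠ 1 := by
      rintro rfl
      simp at hw
    obtain ⟨i, hi⟩ := hs.presented.exists_rightDescent_of_ne_one (ne_one hn)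
    obtain ⟨j, hj⟩ := hs.presented.exists_rightDescent_of_ne_one (ne_one hyn)
    obtain ⟨z, hz, hzx, hzi, hzj⟩ :=
      hs.exists_isTight_of_descents (hx.smul_notMem hi) (hxy ▸ hy.smul_notMem hj)
    exact (common_descent hx hz hzx.symm hn hi hzi).trans
      (common_descent hy hz (hxy ▸ hzx.symm) hyn hj hzj).symm

variable (hs)
include hs

theorem isTight (x : hs.coxeterMatrix.Group) : hs.IsTight x := by
  induction x using hs.presented.simple_induction_right with
  | one => exact hs.isTight_of_length_le (by simp)
  | mul_simple_right x i hx =>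
    by_cases hpos : hs.ofCoxeterGroup x • a i ∈ P
    · refine hs.isTight_of_length_le ?_
      rw [map_mul, hs.ofCoxeterGroup_simple, hs.ncard_inversions_mul_simple hpos, hx]
      exact (hs.presented.length_mul_le x _).trans (by rw [hs.presented.length_simple])
    · obtain ⟨z, hz, hzx⟩ := hs.exists_isTight (hs.ofCoxeterGroup (x * hs.presented.simple i))
      rw [map_mul, hs.ofCoxeterGroup_simple] at hzx
      have hmap : hs.ofCoxeterGroup (z * hs.presented.simple i) = hs.ofCoxeterGroup x := by
        rw [map_mul, hs.ofCoxeterGroup_simple, hzx, hs.mul_simple_cancel_right]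
      have hlen : (inversions P (hs.ofCoxeterGroup z)).ncard + 1 =
          (inversions P (hs.ofCoxeterGroup x)).ncard :=
        hzx ▸ hs.ncard_inversions_mul_simple_add_one hpos
      have htight : hs.IsTight (z * hs.presented.simple i) := by
        refine hs.isTight_of_length_le ((hs.presented.length_mul_le z _).trans ?_)
        rw [hs.presented.length_simple, hmap, ← hlen, hz]
      rwa [← htight.eq_of_ofCoxeterGroup_eq hx hmap, hs.presented.simple_mul_simple_cancel_right]

theorem bijective_ofCoxeterGroup : Function.Bijective hs.ofCoxeterGroup := by
  refine ⟨fun x y hxy ↦ (hs.isTight x).eq_of_ofCoxeterGroup_eq (hs.isTight y) hxy, fun g ↦ ?_⟩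
  obtain ⟨x, -, hx⟩ := hs.exists_isTight g
  exact ⟨x, hx⟩

/-- The Coxeter system on `G` whose simple reflections are the `s i`. -/
def coxeterSystem : CoxeterSystem hs.coxeterMatrix G :=
  hs.presented.map (MulEquiv.ofBijective hs.ofCoxeterGroup hs.bijective_ofCoxeterGroup)

theorem coxeterSystem_simple (i : B) : hs.coxeterSystem.simple i = s i :=
  hs.ofCoxeterGroup_simple i

theorem coxeterSystem_wordProd (ω : List B) : hs.coxeterSystem.wordProd ω = wordProd s ω := by
  simp only [CoxeterSystem.wordProd, wordProd, funext hs.coxeterSystem_simple]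

theorem length_coxeterSystem (g : G) : hs.coxeterSystem.length g = (inversions P g).ncard := by
  apply le_antisymm
  · obtain ⟨ω, rfl, hω⟩ := hs.exists_reduced_word g
    rw [← hω, ← hs.coxeterSystem_wordProd]
    exact hs.coxeterSystem.length_wordProd_le ω
  · obtain ⟨ω, hω, rfl⟩ := hs.coxeterSystem.exists_isReduced g
    rw [hω.eq, hs.coxeterSystem_wordProd]
    exact hs.ncard_inversions_wordProd_le ω

end IsSimpleSystem

end SemiInf

namespace SemiInf.Ctx

variable {C : Ctx}

/-! ### The finite root system -/

section FiniteRootSystem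

variable (C) in
/-- The pairing of `C` as a `ℤ`-bilinear form on `X × Y`. -/
def pairing : C.X →ₗ[ℤ] C.Y →ₗ[ℤ] ℤ :=
  LinearMap.mk₂ ℤ (fun x y ↦ C.pair y x) (by simp) (by simp) (by simp) (by simp)

variable (C) in
/-- `s` acts on `X` and on `Y` as the reflection attached to the root `α`. -/
def IsReflection (α : C.X) (s : C.W) : Prop :=
  (∀ x : C.X, s • x = x - C.pair (C.coroot α) x • α) ∧
    ∀ y : C.Y, s • y = y - C.pair y α • C.coroot α

variable (C) in
/-- The reflection `s_α ∈ W_f` attached to a root `α`; a junk value if `α` is not a root. -/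
def reflection (α : C.X) : C.W := Classical.epsilon (C.IsReflection α)

namespace IsRootDatum

variable (h : C.IsRootDatum) {α β : C.X}

include h

theorem isReflection_reflection (hα : α ∈ C.roots) : C.IsReflection α (C.reflection α) :=
  Classical.epsilon_spec (h.isReflection α hα)

theorem reflection_smul (hα : α ∈ C.roots) (x : C.X) :
    C.reflection α • x = x - C.pair (C.coroot α) x • α :=
  (h.isReflection_reflection hα).1 x

theorem reflection_smul_self (hα : α ∈ C.roots) : C.reflection α • α = -α := by
  rw [h.reflection_smul hα, h.coroot_self α hα]
  module

theorem eq_reflection (hα : α ∈ C.roots) {s : C.W} (hs : C.IsReflection α s) :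
    s = C.reflection α :=
  inv_mul_eq_one.mp <| h.faithful_X _ fun x ↦ by
    rw [mul_smul, h.reflection_smul hα, ← hs.1, inv_smul_smul]

theorem neg_mem_roots (hα : α ∈ C.roots) : -α ∈ C.roots :=
  h.reflection_smul_self hα ▸ h.roots_stable (C.reflection α) α hα

theorem smul_mem_roots_iff (w : C.W) : w • α ∈ C.roots ↔ α ∈ C.roots :=
  ⟨fun hα ↦ inv_smul_smul w α ▸ h.roots_stable w⁻¹ _ hα, h.roots_stable w α⟩

theorem pair_coroot_smul (w : C.W) (hα : α ∈ C.roots) (x : C.X) :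
    C.pair (C.coroot (w • α)) (w • x) = C.pair (C.coroot α) x := by
  rw [← h.smul_coroot w α hα, h.pair_inv]

theorem coroot_neg (hα : α ∈ C.roots) : C.coroot (-α) = -C.coroot α := by
  rw [← h.reflection_smul_self hα, ← h.smul_coroot _ α hα, (h.isReflection_reflection hα).2,
    h.coroot_self α hα]
  module

theorem isPerfPair_pairing : C.pairing.IsPerfPair where
  bijective_left := (addMonoidHomLequivInt ℤ).bijective.comp h.perfect_right
  bijective_right := (addMonoidHomLequivInt ℤ).bijective.comp h.perfect_left

theorem coroot_injOn : Set.InjOn C.coroot C.roots := by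
  intro α hα β hβ hαβ
  have := h.free_X
  have mapsTo {γ : C.X} (hγ : γ ∈ C.roots) :
      Set.MapsTo (Module.preReflection γ (C.pairing.flip (C.coroot γ))) C.roots C.roots :=
    fun x hx ↦ show x - C.pair (C.coroot γ) x • γ ∈ C.roots from
      h.reflection_smul hγ x ▸ h.roots_stable (C.reflection γ) x hx
  have := IsAddTorsionFree.of_isTorsionFree ℤ C.X
  exact Module.eq_of_mapsTo_reflection_of_mem C.roots.finite_toSet (h.coroot_self α hα)
    (h.coroot_self β hβ) (hαβ ▸ h.coroot_self α hα) (hαβ ▸ h.coroot_self β hβ) (mapsTo hα)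
    (mapsTo hβ) hβ

/-- Mathlib's root pairing attached to the root datum. -/
def rootPairing : RootPairing C.roots ℤ C.X C.Y where
  toLinearMap := C.pairing
  isPerfPair_toLinearMap := h.isPerfPair_pairing
  root := Function.Embedding.subtype _
  coroot := ⟨fun α ↦ C.coroot α, h.coroot_injOn.injective⟩
  root_coroot_two α := h.coroot_self α α.2
  reflectionPerm α := (MulAction.toPerm (C.reflection α)).subtypePerm fun β ↦
    h.smul_mem_roots_iff _
  reflectionPerm_root α β := (h.reflection_smul α.2 β).symm
  reflectionPerm_coroot α β := by
    exact ((h.isReflection_reflection α.2).2 _).symm.trans (h.smul_coroot _ β β.2)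

theorem isCrystallographic_rootPairing : h.rootPairing.IsCrystallographic :=
  ⟨fun _ _ ↦ ⟨_, rfl⟩⟩

theorem pairingIn_rootPairing [h.rootPairing.IsCrystallographic] (i j : C.roots) :
    h.rootPairing.pairingIn ℤ i j = C.pair (C.coroot j) i :=
  h.rootPairing.algebraMap_pairingIn ℤ i j

theorem pair_coroot_pos_comm (hα : α ∈ C.roots) (hβ : β ∈ C.roots) :
    0 < C.pair (C.coroot α) β ↔ 0 < C.pair (C.coroot β) α := by
  have := h.isCrystallographic_rootPairing
  simpa only [h.pairingIn_rootPairing] using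
    h.rootPairing.zero_lt_pairingIn_iff' ℤ (i := ⟨β, hβ⟩) (j := ⟨α, hα⟩)

theorem sub_mem_roots (hα : α ∈ C.roots) (hβ : β ∈ C.roots) (hne : β ≠ α)
    (hpos : 0 < C.pair (C.coroot α) β) : β - α ∈ C.roots := by
  have := h.isCrystallographic_rootPairing
  obtain ⟨γ, hγ⟩ := h.rootPairing.root_sub_root_mem_of_pairingIn_pos
    (i := ⟨β, hβ⟩) (j := ⟨α, hα⟩) (by rwa [h.pairingIn_rootPairing]) (by simpa using hne)
  exact hγ ▸ γ.2

/-- The part of the `α`-string through `β` that lies between `β` and `s_α β` is unbroken. -/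
theorem sub_nsmul_mem_roots_or_eq_zero (hα : α ∈ C.roots) (hβ : β ∈ C.roots) (j : ℕ)
    (hj : j ≤ C.pair (C.coroot α) β) : β - j • α ∈ C.roots ∨ β - j • α = 0 := by
  induction j using Nat.strong_induction_on with
  | h j ih =>
  have pair_sub (i : ℕ) :
      C.pair (C.coroot α) (β - i • α) = C.pair (C.coroot α) β - 2 * i := by
    simp [h.coroot_self α hα, mul_comm]
  obtain rfl | hj0 := j.eq_zero_or_pos
  · simp [hβ]
  obtain ⟨k, hk⟩ := Int.eq_ofNat_of_zero_le (a := C.pair (C.coroot α) β) (by lia)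
  rcases le_or_gt (2 * j) k with hjk | hjk
  · obtain ⟨i, rfl⟩ := Nat.exists_eq_succ_of_ne_zero hj0.ne'
    have hpos : 0 < C.pair (C.coroot α) (β - i • α) := by rw [pair_sub]; lia
    have hsub : β - i.succ • α = β - i • α - α := by rw [succ_nsmul]; abel
    rw [hsub, sub_eq_zero]
    rcases ih i i.lt_succ_self (by lia) with hi | hi
    · exact or_iff_not_imp_right.mpr fun hne ↦ h.sub_mem_roots hα hi hne hpos
    · simp [hi] at hpos
  · have hrefl : C.reflection α • (β - (k - j) • α) = β - j • α := by
      rw [h.reflection_smul hα, pair_sub, hk, ← natCast_zsmul, ← natCast_zsmul]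
      push_cast [show j ≤ k by lia]
      module
    rw [← hrefl]
    exact (ih (k - j) (by lia) (by lia)).imp (h.roots_stable _ _) fun h0 ↦ by rw [h0, smul_zero]

end IsRootDatum

end FiniteRootSystem

/-! ### Affine roots and alcoves -/

section AffineAction

variable (C) in
/-- Affine functions on `Y`: the pair `(x, n)` stands for `y ↦ n - ⟨y, x⟩`. -/
abbrev AffFun : Type := C.X × ℤ

variable [hC : Fact C.IsRootDatum]

instance : DistribMulAction C.Wext C.AffFun where
  smul g v := (g.right • v.1, v.2 + C.pair g.left.toAdd (g.right • v.1))
  one_smul v := Prod.ext (one_smul _ _) (by simp [HSMul.hSMul])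
  mul_smul g k v := by
    refine Prod.ext (mul_smul _ _ _) ?_
    change v.2 + C.pair (g.left.toAdd + g.right • k.left.toAdd) ((g.right * k.right) • v.1) =
      v.2 + C.pair k.left.toAdd (k.right • v.1) + C.pair g.left.toAdd (g.right • k.right • v.1)
    rw [map_add, AddMonoidHom.add_apply, mul_smul, hC.out.pair_inv]
    ring
  smul_zero g := Prod.ext (smul_zero g.right) <| by
    change 0 + C.pair g.left.toAdd (g.right • 0) = 0
    simp
  smul_add g v w := Prod.ext (smul_add _ _ _) <| by
    change v.2 + w.2 + C.pair g.left.toAdd (g.right • (v.1 + w.1)) =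
      v.2 + C.pair g.left.toAdd (g.right • v.1) + (w.2 + C.pair g.left.toAdd (g.right • w.1))
    rw [smul_add, map_add]
    ring

theorem smul_fst (g : C.Wext) (v : C.AffFun) : (g • v).1 = g.right • v.1 := rfl

theorem smul_snd (g : C.Wext) (v : C.AffFun) :
    (g • v).2 = v.2 + C.pair g.left.toAdd (g.right • v.1) := rfl

instance : FaithfulSMul C.Wext C.AffFun where
  eq_of_smul_eq_smul {g k} hgk := by
    have right_eq : g.right = k.right := inv_mul_eq_one.mp <| hC.out.faithful_X _ fun x ↦ by
      rw [mul_smul, inv_smul_eq_iff]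
      exact (congrArg Prod.fst (hgk (x, 0))).symm
    refine SemidirectProduct.ext (Multiplicative.toAdd.injective ?_) right_eq
    refine hC.out.perfect_left.injective (AddMonoidHom.ext fun x ↦ ?_)
    have := congrArg Prod.snd (hgk (g.right⁻¹ • x, 0))
    simpa [smul_snd, ← right_eq] using this

variable (C) in
/-- The roots of the affine root system: affine functions whose gradient is a root. -/
def affineRoots : Set C.AffFun := {b | b.1 ∈ C.roots}

/-- The reflection in `W_ext` attached to an affine root `b`; a junk value otherwise. -/
def affineReflection (b : C.AffFun) : C.Wext :=
  ⟨Multiplicative.ofAdd (b.2 • C.coroot b.1), C.reflection b.1⟩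

variable {b : C.AffFun}

theorem smul_mem_affineRoots (g : C.Wext) (hb : b ∈ C.affineRoots) : g • b ∈ C.affineRoots :=
  hC.out.roots_stable _ _ hb

theorem neg_mem_affineRoots (hb : b ∈ C.affineRoots) : -b ∈ C.affineRoots :=
  hC.out.neg_mem_roots hb

theorem affineReflection_smul (hb : b ∈ C.affineRoots) (v : C.AffFun) :
    affineReflection b • v = v - C.pair (C.coroot b.1) v.1 • b := by
  refine Prod.ext (hC.out.reflection_smul hb v.1) ?_
  rw [smul_snd]
  simp only [affineReflection, hC.out.reflection_smul hb, toAdd_ofAdd, map_zsmul, map_sub,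
    AddMonoidHom.zsmul_apply, hC.out.coroot_self _ hb, smul_eq_mul, Prod.snd_sub, Prod.smul_snd]
  ring

theorem affineReflection_smul_self (hb : b ∈ C.affineRoots) : affineReflection b • b = -b := by
  rw [affineReflection_smul hb, hC.out.coroot_self _ hb]
  module

theorem mul_affineReflection (g : C.Wext) (hb : b ∈ C.affineRoots) :
    g * affineReflection b = affineReflection (g • b) * g := by
  refine FaithfulSMul.eq_of_smul_eq_smul fun v : C.AffFun ↦ ?_
  rw [mul_smul, mul_smul, affineReflection_smul hb,
    affineReflection_smul (smul_mem_affineRoots g hb), smul_sub, smul_fst, smul_fst,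
    hC.out.pair_coroot_smul _ hb, smul_comm]

theorem affineReflection_neg (hb : b ∈ C.affineRoots) :
    affineReflection (-b) = affineReflection b := by
  refine FaithfulSMul.eq_of_smul_eq_smul fun v : C.AffFun ↦ ?_
  rw [affineReflection_smul hb, affineReflection_smul (neg_mem_affineRoots hb), Prod.fst_neg,
    hC.out.coroot_neg hb, map_neg, AddMonoidHom.neg_apply, neg_smul_neg]

theorem affineReflection_mul_self (hb : b ∈ C.affineRoots) :
    affineReflection b * affineReflection b = 1 := by
  refine FaithfulSMul.eq_of_smul_eq_smul fun v : C.AffFun ↦ ?_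
  rw [mul_smul, affineReflection_smul hb v, smul_sub, affineReflection_smul hb v, one_smul,
    smul_comm, affineReflection_smul_self hb]
  module

theorem t_coroot {α : C.X} (hα : α ∈ C.roots) :
    C.t (C.coroot α) = affineReflection (α, 1) * affineReflection (α, 0) := by
  refine FaithfulSMul.eq_of_smul_eq_smul fun v : C.AffFun ↦ ?_
  rw [mul_smul, affineReflection_smul (b := (α, 0)) hα, affineReflection_smul (b := (α, 1)) hα]
  refine Prod.ext ?_ ?_
  · simp only [t, smul_fst, SemidirectProduct.right_inl, one_smul, Prod.smul_mk, Prod.fst_sub,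
      map_sub, map_zsmul, hC.out.coroot_self α hα]
    module
  · simp only [t, smul_snd, SemidirectProduct.left_inl, toAdd_ofAdd, SemidirectProduct.right_inl,
      one_smul, Prod.smul_mk, Prod.fst_sub, map_sub, map_zsmul, hC.out.coroot_self α hα,
      Prod.snd_sub, smul_eq_mul]
    ring

omit hC in
theorem σ_reflection (α : C.X) : C.σ (C.reflection α) = affineReflection (α, 0) := by
  simp [σ, affineReflection]

end AffineAction

section AlcovePoint

variable (C) in
/-- A point in the interior of an alcove, which singles out the positive affine roots. It is
encoded by numerator and denominator: the point is `-point / scale`. -/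
structure AlcovePoint where
  point : C.Y
  scale : ℤ
  pair_point_pos : ∀ α ∈ C.pos, 0 < C.pair point α
  abs_pair_point_lt : ∀ α ∈ C.roots, |C.pair point α| < scale
  scale_pos : 0 < scale

theorem IsRootDatum.nonempty_alcovePoint (h : C.IsRootDatum) : Nonempty C.AlcovePoint := by
  obtain ⟨η, hη⟩ := h.exists_regular_Y
  have abs_nonneg (α : C.X) (_ : α ∈ C.roots) : 0 ≤ |C.pair η α| := abs_nonneg _
  refine ⟨η, 1 + ∑ α ∈ C.roots, |C.pair η α|, hη, fun α hα ↦ ?_, ?_⟩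
  · have := Finset.single_le_sum abs_nonneg hα
    lia
  · have := Finset.sum_nonneg abs_nonneg
    lia

variable (C) in
/-- The least `n` such that the affine root `(α, n)` is positive. -/
def threshold (α : C.X) : ℤ := if α ∈ C.pos then 0 else 1

theorem threshold_of_mem_pos {α : C.X} (hα : α ∈ C.pos) : C.threshold α = 0 := if_pos hα

theorem threshold_neg [hC : Fact C.IsRootDatum] {α : C.X} (hα : α ∈ C.roots) :
    C.threshold (-α) = 1 - C.threshold α := by
  rcases hC.out.root_decomp α hα with hpos | hneg
  · simp [threshold, hpos, hC.out.pos_neg_disjoint α hpos]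
  · have : α ∉ C.pos := by simpa using hC.out.pos_neg_disjoint _ hneg
    simp [threshold, hneg, this]

namespace AlcovePoint

/-- `scale` times the value of an affine function at the chosen point of the alcove. -/
def height (p : C.AlcovePoint) : C.AffFun →+ ℤ :=
  (AddMonoidHom.mulRight p.scale).comp (AddMonoidHom.snd _ _) +
    (C.pair p.point).comp (AddMonoidHom.fst _ _)

/-- The affine roots that are positive on the alcove. -/
def posRoots (p : C.AlcovePoint) : Set C.AffFun := {b ∈ C.affineRoots | 0 < p.height b}

/-- The positive affine roots together with the positive constant functions (the "imaginary"
roots), which have to be counted among the positive roots for the simple ones to be the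
indecomposable ones. -/
def posFunctions (p : C.AlcovePoint) : Set C.AffFun :=
  {v | (v.1 ∈ C.roots ∨ v.1 = 0) ∧ 0 < p.height v}

/-- The simple affine roots: the indecomposable positive ones. -/
def simpleRoots (p : C.AlcovePoint) : Set C.AffFun :=
  {b ∈ p.posRoots | ∀ x ∈ p.posFunctions, ∀ y ∈ p.posFunctions, b ≠ x + y}

theorem height_apply (p : C.AlcovePoint) (v : C.AffFun) :
    p.height v = v.2 * p.scale + C.pair p.point v.1 := rfl

variable [hC : Fact C.IsRootDatum] {p : C.AlcovePoint} {b c v : C.AffFun}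

theorem pair_point_pos_iff {α : C.X} (hα : α ∈ C.roots) : 0 < C.pair p.point α ↔ α ∈ C.pos := by
  refine ⟨fun hpos ↦ (hC.out.root_decomp α hα).resolve_right fun hneg ↦ ?_, p.pair_point_pos α⟩
  have := p.pair_point_pos _ hneg
  rw [map_neg] at this
  lia

theorem height_pos_iff (hb : b ∈ C.affineRoots) : 0 < p.height b ↔ C.threshold b.1 ≤ b.2 := by
  have abs_lt := abs_lt.mp (p.abs_pair_point_lt b.1 hb)
  have pos_iff := pair_point_pos_iff (p := p) hb
  have scale_pos := p.scale_pos
  rw [height_apply, threshold]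
  rcases lt_trichotomy b.2 0 with hneg | hzero | hpos
  · have : b.2 * p.scale ≤ -1 * p.scale := by gcongr; lia
    split_ifs <;> constructor <;> intro <;> lia
  · rw [hzero, zero_mul, zero_add, pos_iff]
    split_ifs with h <;> simp [h]
  · have : 1 * p.scale ≤ b.2 * p.scale := by gcongr; lia
    split_ifs <;> constructor <;> intro <;> lia

theorem mem_posRoots_iff (hb : b ∈ C.affineRoots) :
    b ∈ p.posRoots ↔ C.threshold b.1 ≤ b.2 :=
  (and_iff_right hb).trans (height_pos_iff hb)

theorem neg_mem_posRoots_iff (hb : b ∈ C.affineRoots) : -b ∈ p.posRoots ↔ b ∉ p.posRoots := by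
  rw [mem_posRoots_iff hb, mem_posRoots_iff (neg_mem_affineRoots hb), Prod.fst_neg, Prod.snd_neg,
    threshold_neg hb]
  lia

theorem height_ne_zero (hb : b ∈ C.affineRoots) : p.height b ≠ 0 := fun h0 ↦ by
  have := neg_mem_posRoots_iff (p := p) hb
  simp [posRoots, hb, neg_mem_affineRoots hb, h0] at this

theorem eq_zero_of_height_eq_zero (hv : v.1 ∈ C.roots ∨ v.1 = 0) (h0 : p.height v = 0) :
    v = 0 := by
  rcases hv with hv | hv
  · exact absurd h0 (height_ne_zero hv)
  · have : v.2 = 0 := by simpa [height_apply, hv, p.scale_pos.ne'] using h0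
    exact Prod.ext hv this

omit hC in
theorem posRoots_subset_posFunctions (p : C.AlcovePoint) : p.posRoots ⊆ p.posFunctions :=
  fun _ hb ↦ ⟨Or.inl hb.1, hb.2⟩

theorem height_sub_nsmul_pos (hb : b ∈ p.simpleRoots) (hc : c ∈ p.posRoots) (hne : c ≠ b) (j : ℕ)
    (hj : j ≤ C.pair (C.coroot b.1) c.1) : 0 < p.height (c - j • b) := by
  have string (i : ℕ) (hi : i ≤ j) :
      (c - i • b).1 ∈ C.roots ∨ (c - i • b).1 = 0 :=
    hC.out.sub_nsmul_mem_roots_or_eq_zero hb.1.1 hc.1 i (by lia)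
  induction j with
  | zero => simpa using hc.2
  | succ j ih =>
    have ih := ih (by lia) fun i hi ↦ string i (by lia)
    by_contra hle
    rcases (not_lt.mp hle).lt_or_eq with hneg | hzero
    · refine hb.2 _ ⟨string j (by lia), ih⟩ (-(c - (j + 1) • b)) ⟨?_, ?_⟩ ?_
      · exact (string (j + 1) le_rfl).imp hC.out.neg_mem_roots neg_eq_zero.mpr
      · rwa [map_neg, neg_pos]
      · module
    · have hcb := sub_eq_zero.mp (eq_zero_of_height_eq_zero (string (j + 1) le_rfl) hzero)
      have hmem : ((j + 1 : ℕ) : ℤ) • b.1 ∈ C.roots := by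
        rw [natCast_zsmul, ← Prod.smul_fst, ← hcb]
        exact hc.1
      obtain rfl : j = 0 := by
        rcases hC.out.reduced b.1 hb.1.1 _ hmem with h1 | h1 <;> lia
      exact hne (by simpa using hcb)

theorem affineReflection_smul_mem_posRoots (hb : b ∈ p.simpleRoots) (hc : c ∈ p.posRoots)
    (hne : c ≠ b) : affineReflection b • c ∈ p.posRoots := by
  refine ⟨smul_mem_affineRoots _ hc.1, ?_⟩
  rw [affineReflection_smul hb.1.1]
  rcases le_or_gt 0 (C.pair (C.coroot b.1) c.1) with hnonneg | hneg
  · obtain ⟨k, hk⟩ := Int.eq_ofNat_of_zero_le hnonneg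
    rw [hk, natCast_zsmul]
    exact height_sub_nsmul_pos hb hc hne k hk.ge
  · have := mul_neg_of_neg_of_pos hneg hb.1.2
    rw [map_sub, map_zsmul, smul_eq_mul]
    linarith [hc.2]

omit hC in
theorem exists_simpleRoot_pair_pos (y : C.Y) (hv : v ∈ p.posFunctions) (hpos : 0 < C.pair y v.1) :
    ∃ a ∈ p.simpleRoots, 0 < C.pair y a.1 := by
  induction hn : (p.height v).toNat using Nat.strong_induction_on generalizing v with
  | h n ih =>
  by_cases hdec : ∃ x ∈ p.posFunctions, ∃ z ∈ p.posFunctions, v = x + z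
  · obtain ⟨x, hx, z, hz, rfl⟩ := hdec
    have hxpos := hx.2
    have hzpos := hz.2
    rw [map_add] at hn
    rw [Prod.fst_add, map_add] at hpos
    rcases lt_or_ge 0 (C.pair y x.1) with hyx | hyx
    · exact ih _ (by lia) hx hyx rfl
    · exact ih _ (by lia) hz (by lia) rfl
  · have hroot : v.1 ∈ C.roots := hv.1.resolve_right fun h0 ↦ by simp [h0] at hpos
    push Not at hdec
    exact ⟨v, ⟨⟨hroot, hv.2⟩, hdec⟩, hpos⟩

theorem affineReflection_mem_of_mem_posRoots {H : Subgroup C.Wext}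
    (hH : ∀ a ∈ p.simpleRoots, affineReflection a ∈ H) (hb : b ∈ p.posRoots) :
    affineReflection b ∈ H := by
  induction hn : (p.height b).toNat using Nat.strong_induction_on generalizing b with
  | h n ih =>
  have hself := hC.out.coroot_self b.1 hb.1
  obtain ⟨a, ha, hba⟩ := exists_simpleRoot_pair_pos (C.coroot b.1)
    (p.posRoots_subset_posFunctions hb) (by lia)
  obtain rfl | hne := eq_or_ne b a
  · exact hH b ha
  have hmem := affineReflection_smul_mem_posRoots ha hb hne
  have hlt : p.height (affineReflection a • b) < p.height b := by
    have := mul_pos ((hC.out.pair_coroot_pos_comm hb.1 ha.1.1).mp hba) ha.1.2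
    rw [affineReflection_smul ha.1.1, map_sub, map_zsmul, smul_eq_mul]
    lia
  have conj := mul_affineReflection (affineReflection a) hb.1
  rw [← H.mul_mem_cancel_left (hH a ha), conj, H.mul_mem_cancel_right (hH a ha)]
  exact ih _ (by have := hmem.2; lia) hmem rfl

theorem affineReflection_mem {H : Subgroup C.Wext}
    (hH : ∀ a ∈ p.simpleRoots, affineReflection a ∈ H) (hb : b ∈ C.affineRoots) :
    affineReflection b ∈ H := by
  by_cases hpos : b ∈ p.posRoots
  · exact affineReflection_mem_of_mem_posRoots hH hpos
  · rw [← affineReflection_neg hb]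
    exact affineReflection_mem_of_mem_posRoots hH ((neg_mem_posRoots_iff hb).mpr hpos)

end AlcovePoint

theorem affineReflection_mem_Waff {b : C.AffFun} (hb : b ∈ C.affineRoots) :
    affineReflection b ∈ C.Waff := by
  rw [affineReflection, SemidirectProduct.mk_eq_inl_mul_inr]
  refine C.Waff.mul_mem (Subgroup.subset_closure (Or.inl ⟨_, ?_, rfl⟩))
    (Subgroup.subset_closure (Or.inr ⟨_, rfl⟩))
  exact C.corootLattice.zsmul_mem (AddSubgroup.subset_closure ⟨_, hb, rfl⟩) _

theorem Waff_le [hC : Fact C.IsRootDatum] {H : Subgroup C.Wext}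
    (hH : ∀ b ∈ C.affineRoots, affineReflection b ∈ H) : C.Waff ≤ H := by
  have t_mem : C.corootLattice ≤ Subgroup.toAddSubgroup' (H.comap SemidirectProduct.inl) := by
    rw [corootLattice, AddSubgroup.closure_le]
    rintro _ ⟨α, hα, rfl⟩
    change C.t (C.coroot α) ∈ H
    rw [t_coroot hα]
    exact H.mul_mem (hH _ hα) (hH _ hα)
  have σ_mem (w : C.W) : C.σ w ∈ H := by
    suffices Subgroup.closure {s | ∃ α ∈ C.roots, C.IsReflection α s} ≤
      H.comap SemidirectProduct.inr from this (hC.out.weyl_gen w)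
    rw [Subgroup.closure_le]
    rintro s ⟨α, hα, hs⟩
    change C.σ s ∈ H
    rw [hC.out.eq_reflection hα hs, σ_reflection]
    exact hH _ hα
  rw [Waff, Subgroup.closure_le]
  rintro _ (⟨l, hl, rfl⟩ | ⟨w, rfl⟩)
  · exact t_mem hl
  · exact σ_mem w

end AlcovePoint

/-! ### The length function -/

section Length

variable [hC : Fact C.IsRootDatum] {p : C.AlcovePoint}

/-- The least `k` such that `g • (α, k)` is positive, for a root `α`. -/
def offset (g : C.Wext) (α : C.X) : ℤ :=
  C.threshold (g.right • α) - C.pair g.left.toAdd (g.right • α)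

theorem len_eq_sum_natAbs_offset (g : C.Wext) : C.len g = ∑ α ∈ C.pos, (offset g α).natAbs := by
  refine Finset.sum_congr rfl fun α _ ↦ ?_
  have pair_eq : C.pair (g.right⁻¹ • g.left.toAdd) α = C.pair g.left.toAdd (g.right • α) := by
    rw [← hC.out.pair_inv g.right, smul_inv_smul]
  rw [pair_eq, offset, threshold]
  split_ifs <;> simp

theorem smul_mem_posRoots_iff (g : C.Wext) {b : C.AffFun} (hb : b ∈ C.affineRoots) :
    g • b ∈ p.posRoots ↔ offset g b.1 ≤ b.2 := by
  rw [AlcovePoint.mem_posRoots_iff (smul_mem_affineRoots g hb), smul_snd, smul_fst, offset,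
    sub_le_iff_le_add]

/-- The positive one of the two opposite affine roots `±(α, k)`, for a positive root `α`. -/
def posAffineRoot (v : Σ _ : C.X, ℤ) : C.AffFun :=
  if 0 ≤ v.2 then (v.1, v.2) else (-v.1, -v.2)

theorem posAffineRoot_injOn : Set.InjOn posAffineRoot {v : Σ _ : C.X, ℤ | v.1 ∈ C.pos} := by
  rintro ⟨α, k⟩ hα ⟨β, l⟩ hβ heq
  simp only [posAffineRoot] at heq
  split_ifs at heq with hk hl hl <;> simp only [Prod.mk.injEq, neg_inj] at heq
  · rw [heq.1, heq.2]
  · exact (hC.out.pos_neg_disjoint β hβ (heq.1 ▸ hα)).elim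
  · exact (hC.out.pos_neg_disjoint α hα (heq.1 ▸ hβ)).elim
  · rw [heq.1, heq.2]

theorem mem_range_posAffineRoot {b : C.AffFun} (hb : b ∈ p.posRoots) :
    ∃ v : Σ _ : C.X, ℤ, v.1 ∈ C.pos ∧ posAffineRoot v = b := by
  have hle := (AlcovePoint.mem_posRoots_iff hb.1).mp hb
  rcases hC.out.root_decomp b.1 hb.1 with hpos | hneg
  · rw [threshold_of_mem_pos hpos] at hle
    exact ⟨⟨b.1, b.2⟩, hpos, if_pos hle⟩
  · have hlt : ¬ 0 ≤ -b.2 := by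
      have := threshold_neg hb.1
      rw [threshold_of_mem_pos hneg] at this
      lia
    exact ⟨⟨-b.1, -b.2⟩, hneg, (if_neg hlt).trans (by simp)⟩

theorem posAffineRoot_mem_inversions_iff (g : C.Wext) {α : C.X} (hα : α ∈ C.pos) (k : ℤ) :
    posAffineRoot ⟨α, k⟩ ∈ inversions p.posRoots g ↔
      0 ≤ k ∧ k < offset g α ∨ offset g α ≤ k ∧ k < 0 := by
  have hroot := hC.out.pos_subset hα
  have hmem : ((α, k) : C.AffFun) ∈ C.affineRoots := hroot
  have pos_iff : ((α, k) : C.AffFun) ∈ p.posRoots ↔ 0 ≤ k := by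
    rw [AlcovePoint.mem_posRoots_iff hmem, threshold_of_mem_pos hα]
  have smul_pos_iff : g • ((α, k) : C.AffFun) ∈ p.posRoots ↔ offset g α ≤ k :=
    smul_mem_posRoots_iff g hmem
  change posAffineRoot _ ∈ p.posRoots ∧ g • posAffineRoot _ ∉ p.posRoots ↔ _
  rw [posAffineRoot]
  split_ifs with hk
  · rw [pos_iff, smul_pos_iff]
    lia
  · change -((α, k) : C.AffFun) ∈ _ ∧ g • -((α, k) : C.AffFun) ∉ _ ↔ _
    rw [smul_neg, AlcovePoint.neg_mem_posRoots_iff hmem,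
      AlcovePoint.neg_mem_posRoots_iff (smul_mem_affineRoots g hmem), not_not, pos_iff,
      smul_pos_iff]
    lia

theorem inversions_posRoots (g : C.Wext) :
    inversions p.posRoots g = posAffineRoot ''
      (C.pos.sigma fun α ↦ Finset.Ico 0 (offset g α) ∪ Finset.Ico (offset g α) 0 :) := by
  have mem_sigma (v : Σ _ : C.X, ℤ) (hv : v.1 ∈ C.pos) :
      posAffineRoot v ∈ inversions p.posRoots g ↔
        v ∈ C.pos.sigma fun α ↦ Finset.Ico 0 (offset g α) ∪ Finset.Ico (offset g α) 0 := by
    simp [posAffineRoot_mem_inversions_iff g hv, hv]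
  refine Set.Subset.antisymm (fun b hb ↦ ?_) (Set.image_subset_iff.mpr fun v hv ↦ ?_)
  · obtain ⟨v, hv, rfl⟩ := mem_range_posAffineRoot hb.1
    exact ⟨v, (mem_sigma v hv).mp hb, rfl⟩
  · exact (mem_sigma v (Finset.mem_sigma.mp hv).1).mpr hv

theorem card_Ico_union_Ico_swap (d : ℤ) :
    (Finset.Ico 0 d ∪ Finset.Ico d 0).card = d.natAbs := by
  rcases le_total 0 d with hd | hd
  · rw [Finset.Ico_eq_empty_of_le hd, Finset.union_empty, Int.card_Ico]
    lia
  · rw [Finset.Ico_eq_empty_of_le hd, Finset.empty_union, Int.card_Ico]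
    lia

theorem ncard_inversions_posRoots (g : C.Wext) : (inversions p.posRoots g).ncard = C.len g := by
  rw [inversions_posRoots, Set.InjOn.ncard_image, Set.ncard_coe_finset, Finset.card_sigma,
    len_eq_sum_natAbs_offset]
  · exact Finset.sum_congr rfl fun α _ ↦ card_Ico_union_Ico_swap _
  · exact posAffineRoot_injOn.mono fun v hv ↦ (Finset.mem_sigma.mp hv).1

end Length

section CoxeterSystem

variable [hC : Fact C.IsRootDatum] (p : C.AlcovePoint)

/-- The reflections in the walls of the alcove, as elements of `W_aff`. -/
def AlcovePoint.simpleReflection (a : p.simpleRoots) : C.Waff :=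
  ⟨affineReflection a, affineReflection_mem_Waff a.2.1.1⟩

theorem closure_range_simpleReflection :
    Subgroup.closure (Set.range p.simpleReflection) = ⊤ := by
  have le_map : C.Waff ≤ (Subgroup.closure (Set.range p.simpleReflection)).map C.Waff.subtype :=
    Waff_le fun b ↦ AlcovePoint.affineReflection_mem fun a ha ↦
      ⟨p.simpleReflection ⟨a, ha⟩, Subgroup.subset_closure ⟨_, rfl⟩, rfl⟩
  refine (Subgroup.eq_top_iff' _).mpr fun g ↦ ?_
  obtain ⟨g', hg', hgg'⟩ := le_map g.2
  rwa [← Subtype.ext hgg']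

theorem isSimpleSystem_Waff :
    IsSimpleSystem p.simpleReflection Subtype.val p.posRoots where
  mul_self a := Subtype.ext (affineReflection_mul_self a.2.1.1)
  injective := Subtype.val_injective
  mem a := a.2.1
  smul_smul_mem_iff g a := by
    change (g : C.Wext) • affineReflection (a : C.AffFun) • (a : C.AffFun) ∈ p.posRoots ↔
      (g : C.Wext) • (a : C.AffFun) ∉ p.posRoots
    rw [affineReflection_smul_self a.2.1.1, smul_neg,
      AlcovePoint.neg_mem_posRoots_iff (smul_mem_affineRoots _ a.2.1.1)]
  smul_mem a b hb hne := AlcovePoint.affineReflection_smul_mem_posRoots a.2 hb hne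
  mul_eq_mul {g a b} hgab := Subtype.ext <| by
    have := mul_affineReflection (g : C.Wext) a.2.1.1
    rwa [show (g : C.Wext) • (a : C.AffFun) = b from hgab] at this
  closure_range := closure_range_simpleReflection p

end CoxeterSystem
end SemiInf.Ctx

/-- There is a subset `S_aff ⊆ W_aff` making `(W_aff, S_aff)` a Coxeter system
whose length function is the restriction of `ℓ` to `W_aff`. -/
theorem statement0 (C : SemiInf.Ctx) (h : C.IsRootDatum) :
    ∃ S : Set C.Waff, ∃ (B : Type) (M : CoxeterMatrix B) (cs : CoxeterSystem M C.Waff),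
      Set.range cs.simple = S ∧ ∀ g : C.Waff, cs.length g = C.len (g : C.Wext) := by
  have := Fact.mk h
  obtain ⟨p⟩ := h.nonempty_alcovePoint
  have hs := SemiInf.Ctx.isSimpleSystem_Waff p
  refine ⟨_, _, _, hs.coxeterSystem, rfl, fun g ↦ ?_⟩
  exact (hs.length_coxeterSystem g).trans (SemiInf.Ctx.ncard_inversions_posRoots (g : C.Wext))
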